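/- Fix t_c, t ≥ 0 and set N_c = exp(D(p(·|c)‖q(·|c)) + t) for each c ∈ 𝒞 and n_c ≥ max(2, exp(D(p_{QC}‖p_C) + t_c)). Then the expected number of samples drawn in one run of hierarchical sampling satisfies E_{C₁,…,C_{n_c} ∼ p_C i.i.d., m ∼ w_C}[n_c + N_{C_m}] ≤ n_c + (χ²(p_C‖p_{QC}) + 1) · (n_c/(n_c − 1)) · E_{c∼p_{QC}}[exp(D(p(·|c)‖q(·|c)) + t)]. -/

import Mathlib

open scoped BigOperators

noncomputable section

namespace HS

variable {𝒳 𝒞 : Type*}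

/-- Pushforward of a mass function on `𝒳` under `g : 𝒳 → 𝒞`. -/
def push (g : 𝒳 → 𝒞) (q : 𝒳 → ℝ) (c : 𝒞) : ℝ :=
  ∑' x, Set.indicator {x : 𝒳 | g x = c} q x

/-- Conditional mass function on the block `g⁻¹(c)`. -/
def cond (g : 𝒳 → 𝒞) (q : 𝒳 → ℝ) (c : 𝒞) (x : 𝒳) : ℝ :=
  Set.indicator {x : 𝒳 | g x = c} (fun x => q x / push g q c) x

/-- Kullback–Leibler divergence between mass functions. -/
def kl {α : Type*} (p q : α → ℝ) : ℝ :=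
  ∑' x, p x * Real.log (p x / q x)

/-- Chi-squared divergence `χ²(pC‖pQC) = Σ_{c : pQC(c)>0} pC(c)²/pQC(c) − 1`. -/
def chiSq [Fintype 𝒞] (pC pQC : 𝒞 → ℝ) : ℝ :=
  (∑ c, Set.indicator {c : 𝒞 | 0 < pQC c} (fun c => pC c ^ 2 / pQC c) c) - 1

end HS

end

open HS

theorem aux_push_sum {𝒳 𝒞 : Type*} [Fintype 𝒞] (g : 𝒳 → 𝒞) (q : 𝒳 → ℝ)
    (hq1 : HasSum q 1) : ∑ c, push g q c = 1 := by
  classical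
  unfold push
  rw [← Summable.tsum_finsetSum (fun c _ => hq1.summable.indicator _), ← hq1.tsum_eq]
  congr 1
  funext x
  simp [Set.indicator_apply]

theorem aux_push_nonneg {𝒳 𝒞 : Type*} (g : 𝒳 → 𝒞) (q : 𝒳 → ℝ)
    (hq : ∀ x, 0 ≤ q x) (c : 𝒞) : 0 ≤ push g q c :=
  tsum_nonneg fun x => Set.indicator_nonneg (fun x _ => hq x) x

theorem aux_two {𝒞 : Type*} [Fintype 𝒞] (Q f h : 𝒞 → ℝ) (hQ : ∑ c, Q c = 1) (n : ℕ)
    (m j : Fin n) (hmj : j ≠ m) :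
    ∑ C : Fin n → 𝒞, (∏ i, Q (C i)) * (f (C m) * h (C j))
      = (∑ c, Q c * f c) * (∑ c, Q c * h c) := by
  classical
  have key := Finset.prod_univ_sum (fun _ : Fin n => (Finset.univ : Finset 𝒞))
    (fun i c => Q c * ((if i = m then f c else 1) * (if i = j then h c else 1)))
  rw [Fintype.piFinset_univ] at key
  have h1 : ∀ C : Fin n → 𝒞, (∏ i, Q (C i)) * (f (C m) * h (C j)) =
      ∏ i, Q (C i) * ((if i = m then f (C i) else 1) * (if i = j then h (C i) else 1)) := by
    intro C
    rw [Finset.prod_mul_distrib, Finset.prod_mul_distrib]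
    simp
  rw [Finset.sum_congr rfl (fun C _ => h1 C), ← key]
  have h2 : ∀ i : Fin n,
      ∑ c, Q c * ((if i = m then f c else 1) * (if i = j then h c else 1)) =
      (if i = m then (∑ c, Q c * f c) else 1) * (if i = j then (∑ c, Q c * h c) else 1) := by
    intro i
    by_cases him : i = m
    · have hij : i ≠ j := fun e => hmj (e ▸ him)
      simp [him, hmj.symm]
    · by_cases hij : i = j
      · simp [hij, hmj]
      · simp [him, hij, hQ]
  rw [Finset.prod_congr rfl (fun i _ => h2 i), Finset.prod_mul_distrib]
  simp

theorem aux_one {𝒞 : Type*} [Fintype 𝒞] (Q : 𝒞 → ℝ) (hQ : ∑ c, Q c = 1) (n : ℕ) :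
    ∑ C : Fin n → 𝒞, (∏ i, Q (C i)) = 1 := by
  classical
  have key := Finset.prod_univ_sum (fun _ : Fin n => (Finset.univ : Finset 𝒞))
    (fun _ c => Q c)
  rw [Fintype.piFinset_univ] at key
  rw [← key]
  simp [hQ]

theorem aux_main {𝒞 : Type*} [Fintype 𝒞] (P Q N : 𝒞 → ℝ) (hP : ∀ c, 0 ≤ P c)
    (hQ0 : ∀ c, 0 ≤ Q c) (hQ : ∑ c, Q c = 1) (h1 : ∀ c, Q c = 0 → P c = 0)
    (h2 : ∀ c, P c = 0 → Q c = 0) (hN : ∀ c, 0 ≤ N c) (n : ℕ) (hn : 2 ≤ n) :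
    ∑ C : Fin n → 𝒞, (∏ j, Q (C j)) *
        ∑ m : Fin n, ((P (C m) / Q (C m)) / ∑ j, P (C j) / Q (C j)) * ((n : ℝ) + N (C m))
      ≤ (n : ℝ) + (chiSq Q P + 1) * ((n : ℝ) / ((n : ℝ) - 1)) * ∑ c, P c * N c := by
  classical
  have hn' : (0 : ℝ) < (n : ℝ) - 1 := by
    have : (2 : ℝ) ≤ n := by exact_mod_cast hn
    linarith
  have hA : ∑ c, Q c * (P c / Q c * N c) = ∑ c, P c * N c := by
    refine Finset.sum_congr rfl fun c _ => ?_
    by_cases h : Q c = 0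
    · simp [h, h1 c h]
    · field_simp
  have hB : ∑ c, Q c * (Q c / P c) = chiSq Q P + 1 := by
    unfold chiSq
    rw [sub_add_cancel]
    refine Finset.sum_congr rfl fun c _ => ?_
    by_cases h : 0 < P c
    · rw [Set.indicator_of_mem (by exact h)]
      ring
    · have : P c = 0 := le_antisymm (not_lt.mp h) (hP c)
      rw [Set.indicator_of_notMem (by exact h)]
      simp [this]
  have point : ∀ C : Fin n → 𝒞, (∏ j, Q (C j)) *
        ∑ m : Fin n, ((P (C m) / Q (C m)) / ∑ j, P (C j) / Q (C j)) * ((n : ℝ) + N (C m))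
      ≤ (n : ℝ) * (∏ j, Q (C j)) + ((n : ℝ) - 1)⁻¹ ^ 2 *
        ∑ m : Fin n, ∑ j ∈ Finset.univ.erase m,
          (∏ i, Q (C i)) * ((P (C m) / Q (C m) * N (C m)) * (Q (C j) / P (C j))) := by
    intro C
    by_cases hz : ∏ j, Q (C j) = 0
    · simp [hz]
    have hpos : ∀ j, 0 < Q (C j) := fun j =>
      lt_of_le_of_ne (hQ0 _) (fun e => hz (Finset.prod_eq_zero (Finset.mem_univ j) e.symm))
    have hPpos : ∀ j, 0 < P (C j) := fun j =>
      lt_of_le_of_ne (hP _) (fun e => (hpos j).ne' (h2 _ e.symm))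
    have hr : ∀ j, 0 < P (C j) / Q (C j) := fun j => div_pos (hPpos j) (hpos j)
    haveI : Nonempty (Fin n) := ⟨⟨0, by omega⟩⟩
    have hS : 0 < ∑ j, P (C j) / Q (C j) :=
      Finset.sum_pos (fun j _ => hr j) Finset.univ_nonempty
    have hprod : 0 ≤ ∏ j, Q (C j) := Finset.prod_nonneg fun j _ => hQ0 _
    have e1 : ∑ m : Fin n, ((P (C m) / Q (C m)) / ∑ j, P (C j) / Q (C j)) * ((n : ℝ) + N (C m))
        = n + ∑ m : Fin n, ((P (C m) / Q (C m)) / ∑ j, P (C j) / Q (C j)) * N (C m) := by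
      simp_rw [mul_add]
      rw [Finset.sum_add_distrib, ← Finset.sum_mul, ← Finset.sum_div, div_self hS.ne', one_mul]
    rw [e1, mul_add, mul_comm _ (n : ℝ)]
    refine add_le_add le_rfl ?_
    rw [Finset.mul_sum, Finset.mul_sum]
    refine Finset.sum_le_sum fun m _ => ?_
    rw [← Finset.mul_sum, ← Finset.mul_sum]
    have hcard : ((Finset.univ.erase m).card : ℝ) = (n : ℝ) - 1 := by
      rw [Finset.card_erase_of_mem (Finset.mem_univ m), Finset.card_univ, Fintype.card_fin,
        Nat.cast_sub (by omega)]
      simp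
    have hne : (Finset.univ.erase m).Nonempty := by
      rw [← Finset.card_pos]
      have : (0 : ℝ) < ((Finset.univ.erase m).card : ℝ) := by rw [hcard]; exact hn'
      exact_mod_cast this
    have hS' : 0 < ∑ j ∈ Finset.univ.erase m, P (C j) / Q (C j) :=
      Finset.sum_pos (fun j _ => hr j) hne
    have cs := Finset.sq_sum_div_le_sum_sq_div (Finset.univ.erase m) (fun _ => (1 : ℝ))
      (g := fun j => P (C j) / Q (C j)) (fun j _ => hr j)
    simp only [Finset.sum_const, nsmul_eq_mul, mul_one, one_pow, one_div_div, hcard] at cs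
    have hle : ∑ j ∈ Finset.univ.erase m, P (C j) / Q (C j) ≤ ∑ j, P (C j) / Q (C j) :=
      Finset.sum_le_sum_of_subset_of_nonneg (Finset.erase_subset _ _) fun j _ _ => (hr j).le
    have hinv : (∑ j, P (C j) / Q (C j))⁻¹ ≤ ((n : ℝ) - 1)⁻¹ ^ 2 *
        ∑ j ∈ Finset.univ.erase m, Q (C j) / P (C j) := by
      calc (∑ j, P (C j) / Q (C j))⁻¹ ≤ (∑ j ∈ Finset.univ.erase m, P (C j) / Q (C j))⁻¹ :=
            inv_anti₀ hS' hle
        _ = ((n : ℝ) - 1)⁻¹ ^ 2 *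
            (((n : ℝ) - 1) ^ 2 / ∑ j ∈ Finset.univ.erase m, P (C j) / Q (C j)) := by
            have := hn'.ne'
            rw [div_eq_mul_inv, ← mul_assoc, ← mul_pow, inv_mul_cancel₀ this, one_pow, one_mul]
        _ ≤ _ := by gcongr
    have hw : 0 ≤ (∏ j, Q (C j)) * (P (C m) / Q (C m) * N (C m)) :=
      mul_nonneg hprod (mul_nonneg (hr m).le (hN _))
    calc _ = (∏ j, Q (C j)) * (P (C m) / Q (C m) * N (C m)) * (∑ j, P (C j) / Q (C j))⁻¹ := by
          rw [div_eq_mul_inv _ (∑ j, P (C j) / Q (C j))]; ring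
      _ ≤ _ := mul_le_mul_of_nonneg_left hinv hw
      _ = _ := by ring
  refine (Finset.sum_le_sum fun C _ => point C).trans (le_of_eq ?_)
  rw [Finset.sum_add_distrib, ← Finset.mul_sum, aux_one Q hQ, mul_one, ← Finset.mul_sum,
    Finset.sum_comm]
  congr 1
  have e3 : ∀ m : Fin n, ∑ C : Fin n → 𝒞, ∑ j ∈ Finset.univ.erase m,
          (∏ i, Q (C i)) * ((P (C m) / Q (C m) * N (C m)) * (Q (C j) / P (C j)))
        = ((n : ℝ) - 1) * ((∑ c, P c * N c) * (chiSq Q P + 1)) := by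
    intro m
    rw [Finset.sum_comm]
    rw [Finset.sum_congr rfl (fun j hj => aux_two Q (fun c => P c / Q c * N c)
      (fun c => Q c / P c) hQ n m j (Finset.ne_of_mem_erase hj))]
    rw [hA, hB, Finset.sum_const, nsmul_eq_mul,
      Finset.card_erase_of_mem (Finset.mem_univ m), Finset.card_univ, Fintype.card_fin,
        Nat.cast_sub (by omega)]
    simp
  rw [Finset.sum_congr rfl fun m _ => e3 m, Finset.sum_const, nsmul_eq_mul, Finset.card_univ,
    Fintype.card_fin]
  have := hn'.ne'
  field_simp

/-- bound on the expected number of samples drawn in one run of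
hierarchical sampling, with `N_c = exp(D(p(·|c)‖q(·|c)) + t)`. -/
theorem stmt8 {𝒳 𝒞 : Type*} [Countable 𝒳] [Fintype 𝒞]
    (g : 𝒳 → 𝒞) (p q : 𝒳 → ℝ)
    (hp0 : ∀ x, 0 ≤ p x) (hq0 : ∀ x, 0 ≤ q x)
    (hp1 : HasSum p 1) (hq1 : HasSum q 1)
    (hac : ∀ x, q x = 0 → p x = 0)
    (hacC1 : ∀ c, push g q c = 0 → push g p c = 0)
    (hacC2 : ∀ c, push g p c = 0 → push g q c = 0)
    (hKL : Summable fun x => p x * Real.log (p x / q x))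
    (hKLcond : ∀ c : 𝒞, Summable fun x =>
      cond g p c x * Real.log (cond g p c x / cond g q c x))
    (tc t : ℝ) (htc : 0 ≤ tc) (ht : 0 ≤ t)
    (nc : ℕ) (hnc2 : 2 ≤ nc)
    (hnc : Real.exp (kl (push g p) (push g q) + tc) ≤ (nc : ℝ))
    (N : 𝒞 → ℝ)
    (hN : ∀ c : 𝒞, N c = Real.exp (kl (cond g p c) (cond g q c) + t)) :
    ∑ C : Fin nc → 𝒞, (∏ j, push g q (C j)) *
        ∑ m : Fin nc,
          ((push g p (C m) / push g q (C m)) /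
              ∑ j, push g p (C j) / push g q (C j)) * ((nc : ℝ) + N (C m))
      ≤ (nc : ℝ) + (chiSq (push g q) (push g p) + 1) * ((nc : ℝ) / ((nc : ℝ) - 1)) *
          ∑ c, push g p c * Real.exp (kl (cond g p c) (cond g q c) + t) := by
  have hN0 : ∀ c, 0 ≤ N c := fun c => by rw [hN]; positivity
  simp_rw [← hN]
  exact aux_main (push g p) (push g q) N (aux_push_nonneg g p hp0) (aux_push_nonneg g q hq0)
    (aux_push_sum g q hq1) hacC1 hacC2 hN0 nc hnc2
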